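/- arXiv:2002.01130 — 2 statements merged into one kernel-verified Lean document; each statement's English description precedes it below -/
import Mathlib

section
/- Let k be a commutative ring with unity, N ≥ 2 an integer, and q ∈ k a primitive N-th root of unity. For every integer t with 1 ≤ t ≤ N one has Σ_{j=0}^{t} (−1)^j · q^{j(j−1)/2} · [t choose j] = 0 in k. -/
/-- The `q`-integer `[m] = 1 + q + ⋯ + q^{m-1}`. -/
def qInt {k : Type*} [CommRing k] (q : k) (m : ℕ) : k := ∑ i ∈ Finset.range m, q ^ i

/-- The `q`-factorial `[m]! = [m][m-1]⋯[1]`, with `[0]! = 1`. -/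
def qFact {k : Type*} [CommRing k] (q : k) (m : ℕ) : k := ∏ i ∈ Finset.range m, qInt q (i + 1)

/-- `QBinomSpec q N m l c` says that `c` is *the* `q`-binomial coefficient `[m choose l]`
(for `0 ≤ l ≤ m ≤ N`): in the special cases `(l,m) = (0,N), (N,N)` it is `1` by convention,
and otherwise it is characterized by `[l]! ⬝ [m-l]! ⬝ c = [m]!`. -/
def QBinomSpec {k : Type*} [CommRing k] (q : k) (N m l : ℕ) (c : k) : Prop :=
  ((m = N ∧ (l = 0 ∨ l = N)) → c = 1) ∧
  (¬(m = N ∧ (l = 0 ∨ l = N)) → qFact q l * qFact q (m - l) * c = qFact q m)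

/-!
The alternating sum is the value at `x = -1` of the `q`-binomial theorem
`∏_{i < t} (1 + q ^ i x) = ∑_j q ^ (j choose 2) [t choose j] x ^ j`, whose factor `i = 0` vanishes
there. The theorem holds over any commutative semiring for the coefficients given by the `q`-Pascal
recursion, and cancelling `q`-factorials identifies these with the coefficients in the statement.
The factorial relation for `[N choose 0]` and `[N choose N]` cannot be cancelled, because `[N]!` may
vanish, but the convention gives these two the same value `1` as the recursion does.
-/

section CommSemiring

variable {R : Type*} [CommSemiring R]

/-- The Gaussian binomial coefficient `[n choose j]` at `q`, defined by the `q`-Pascal recursion so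
that it makes sense for every `q`, including those at which `q`-factorials are zero divisors. -/
def qBinom (q : R) : ℕ → ℕ → R
  | _, 0 => 1
  | 0, _ + 1 => 0
  | n + 1, j + 1 => qBinom q n j + q ^ (j + 1) * qBinom q n (j + 1)

theorem qBinom_zero_right (q : R) (n : ℕ) : qBinom q n 0 = 1 := by
  cases n <;> rfl

theorem qBinom_succ_succ (q : R) (n j : ℕ) :
    qBinom q (n + 1) (j + 1) = qBinom q n j + q ^ (j + 1) * qBinom q n (j + 1) :=
  rfl

theorem qBinom_eq_zero_of_lt (q : R) {n j : ℕ} (h : n < j) : qBinom q n j = 0 := by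
  induction n generalizing j with
  | zero =>
    obtain ⟨j, rfl⟩ := Nat.exists_eq_add_one.mpr h
    rfl
  | succ n ih =>
    obtain ⟨j, rfl⟩ := Nat.exists_eq_add_one.mpr (Nat.zero_lt_of_lt h)
    rw [qBinom_succ_succ, ih (by omega), ih (by omega), mul_zero, add_zero]

theorem qBinom_self (q : R) (n : ℕ) : qBinom q n n = 1 := by
  induction n with
  | zero => rfl
  | succ n ih =>
    rw [qBinom_succ_succ, ih, qBinom_eq_zero_of_lt q n.lt_succ_self, mul_zero, add_zero]

theorem prod_one_add_pow_mul_eq_sum_qBinom (q x : R) (n : ℕ) :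
    ∏ i ∈ Finset.range n, (1 + q ^ i * x) =
      ∑ j ∈ Finset.range (n + 1), q ^ j.choose 2 * qBinom q n j * x ^ j := by
  induction n generalizing x with
  | zero => simp [qBinom_zero_right]
  | succ n ih =>
    let a (j : ℕ) : R := q ^ j.choose 2 * qBinom q n j * (q * x) ^ j
    have a_zero : a 0 = 1 := by simp [a, qBinom_zero_right]
    have a_last : a (n + 1) = 0 := by simp [a, qBinom_eq_zero_of_lt q n.lt_succ_self]
    have coeff_succ (j : ℕ) :
        q ^ (j + 1).choose 2 * qBinom q (n + 1) (j + 1) * x ^ (j + 1) = a (j + 1) + x * a j := by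
      simp only [a, qBinom_succ_succ, Nat.choose_succ_succ' j 1, Nat.choose_one_right]
      ring
    calc ∏ i ∈ Finset.range (n + 1), (1 + q ^ i * x)
        = (∏ i ∈ Finset.range n, (1 + q ^ i * (q * x))) * (1 + x) := by
          simp only [Finset.prod_range_succ', pow_succ, pow_zero, one_mul, mul_assoc]
      _ = ∑ j ∈ Finset.range (n + 2), a j + x * ∑ j ∈ Finset.range (n + 1), a j := by
          rw [ih, Finset.sum_range_succ a (n + 1), a_last]
          ring
      _ = ∑ j ∈ Finset.range (n + 1), (a (j + 1) + x * a j) + 1 := by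
          rw [Finset.sum_range_succ' a, a_zero, Finset.sum_add_distrib, Finset.mul_sum]
          ring
      _ = ∑ j ∈ Finset.range (n + 2), q ^ j.choose 2 * qBinom q (n + 1) j * x ^ j := by
          simp [Finset.sum_range_succ' _ (n + 1), coeff_succ, qBinom_zero_right]

end CommSemiring

section CommRing

variable {k : Type*} [CommRing k]

theorem sum_neg_one_pow_mul_qBinom_eq_zero (q : k) {n : ℕ} (hn : n ≠ 0) :
    ∑ j ∈ Finset.range (n + 1), (-1) ^ j * q ^ j.choose 2 * qBinom q n j = 0 := by
  calc ∑ j ∈ Finset.range (n + 1), (-1) ^ j * q ^ j.choose 2 * qBinom q n j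
      = ∏ i ∈ Finset.range n, (1 + q ^ i * (-1)) := by
        rw [prod_one_add_pow_mul_eq_sum_qBinom]
        exact Finset.sum_congr rfl fun j _ => by ring
    _ = 0 := Finset.prod_eq_zero (Finset.mem_range.mpr (Nat.pos_of_ne_zero hn)) (by simp)

theorem qInt_add (q : k) (a b : ℕ) : qInt q (a + b) = qInt q a + q ^ a * qInt q b := by
  simp only [qInt, Finset.sum_range_add, Finset.mul_sum, pow_add]

theorem qFact_zero (q : k) : qFact q 0 = 1 :=
  Finset.prod_range_zero _

theorem qFact_succ (q : k) (n : ℕ) : qFact q (n + 1) = qFact q n * qInt q (n + 1) :=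
  Finset.prod_range_succ _ n

theorem qFact_mul_qFact_mul_qBinom (q : k) (l m : ℕ) :
    qFact q l * qFact q m * qBinom q (l + m) l = qFact q (l + m) := by
  induction l generalizing m with
  | zero => rw [qFact_zero, qBinom_zero_right, one_mul, mul_one, zero_add]
  | succ l ihl =>
    induction m with
    | zero => rw [add_zero, qFact_zero, qBinom_self, mul_one, mul_one]
    | succ m ihm =>
      have left := ihl (m + 1)
      rw [show l + (m + 1) = l + 1 + m by omega, qFact_succ q m] at left
      have split : qInt q (l + 1 + m + 1) = qInt q (l + 1) + q ^ (l + 1) * qInt q (m + 1) :=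
        qInt_add q (l + 1) (m + 1)
      rw [← add_assoc, qBinom_succ_succ, qFact_succ q (l + 1 + m), split, qFact_succ q m]
      rw [qFact_succ q l] at ihm ⊢
      linear_combination qInt q (l + 1) * left + q ^ (l + 1) * qInt q (m + 1) * ihm

theorem qInt_mem_nonZeroDivisors {q : k} {m : ℕ} (h : q ^ m - 1 ∈ nonZeroDivisors k) :
    qInt q m ∈ nonZeroDivisors k := by
  rw [← geom_sum_mul] at h
  exact (mul_mem_nonZeroDivisors.mp h).1

theorem qFact_mem_nonZeroDivisors {q : k} {m : ℕ}
    (h : ∀ l, 1 ≤ l → l ≤ m → qInt q l ∈ nonZeroDivisors k) : qFact q m ∈ nonZeroDivisors k :=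
  prod_mem fun i hi => h (i + 1) i.succ_pos (Finset.mem_range.mp hi)

theorem QBinomSpec.eq_qBinom {q : k} {N m l : ℕ} {c : k} (hc : QBinomSpec q N m l c)
    (hq : ∀ i, 1 ≤ i → i < N → qInt q i ∈ nonZeroDivisors k) (hlm : l ≤ m) (hmN : m ≤ N) :
    c = qBinom q m l := by
  by_cases hconv : m = N ∧ (l = 0 ∨ l = N)
  · rw [hc.1 hconv]
    obtain ⟨rfl, rfl | rfl⟩ := hconv
    · rw [qBinom_zero_right]
    · rw [qBinom_self]
  · have qFact_mem {i : ℕ} (hi : i < N) : qFact q i ∈ nonZeroDivisors k :=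
      qFact_mem_nonZeroDivisors fun j hj hji => hq j hj (hji.trans_lt hi)
    have denom_mem : qFact q l * qFact q (m - l) ∈ nonZeroDivisors k :=
      mul_mem (qFact_mem (by omega)) (qFact_mem (by omega))
    have hfact := qFact_mul_qFact_mul_qBinom q l (m - l)
    rw [Nat.add_sub_of_le hlm] at hfact
    exact (mul_cancel_left_mem_nonZeroDivisors denom_mem).mp ((hc.2 hconv).trans hfact.symm)

theorem q_alternating_sum_eq_zero_general {q : k} {N t : ℕ}
    (hq : ∀ l, 1 ≤ l → l < N → qInt q l ∈ nonZeroDivisors k) (ht : 1 ≤ t) (htN : t ≤ N)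
    {c : ℕ → k} (hc : ∀ j ≤ t, QBinomSpec q N t j (c j)) :
    ∑ j ∈ Finset.range (t + 1), (-1) ^ j * q ^ (j * (j - 1) / 2) * c j = 0 := by
  rw [← sum_neg_one_pow_mul_qBinom_eq_zero q (Nat.one_le_iff_ne_zero.mp ht)]
  refine Finset.sum_congr rfl fun j hj => ?_
  have hjt : j ≤ t := Finset.mem_range_succ_iff.mp hj
  rw [(hc j hjt).eq_qBinom hq hjt htN, Nat.choose_two_right]

end CommRing

/-- for `1 ≤ t ≤ N`,
`Σ_{j=0}^{t} (−1)^j ⬝ q^{j(j−1)/2} ⬝ [t choose j] = 0` in `k`. -/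
theorem q_alternating_sum_eq_zero
    {k : Type*} [CommRing k] (N : ℕ) (hN : 2 ≤ N) (q : k)
    (hq1 : q ^ N = 1)
    (hq2 : ∀ l : ℕ, 1 ≤ l → l ≤ N - 1 → q ^ l - 1 ∈ nonZeroDivisors k)
    (t : ℕ) (ht1 : 1 ≤ t) (htN : t ≤ N)
    (c : ℕ → k) (hc : ∀ j ≤ t, QBinomSpec q N t j (c j)) :
    ∑ j ∈ Finset.range (t + 1), (-1 : k) ^ j * q ^ (j * (j - 1) / 2) * c j = 0 := by
  exact q_alternating_sum_eq_zero_general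
    (fun l hl hlN => qInt_mem_nonZeroDivisors (hq2 l hl (Nat.le_sub_one_of_lt hlN))) ht1 htN hc
end

section
/- Let k be a commutative ring with unity, N ≥ 2 an integer, q ∈ k a primitive N-th root of unity, U and V k-modules, and d_U, d_V k-linear endomorphisms of U and V respectively. For each s ∈ ℤ define the k-linear operator D_s on Hom_k(U,V) by D_s(g) = d_V∘g − q^s·(g∘d_U), where integer powers of the unit q are used. Then for every f ∈ Hom_k(U,V): (D_{−1}∘D_{−2}∘⋯∘D_{1−N})(f) = Σ_{l=0}^{N−1} d_V^{N−1−l}∘f∘d_U^{l}. (This says that the (N−1)-st iterated differential of the Hom-complex applied to a homogeneous morphism of degree 1−N is the plain sum Σ_l d^{N−1−l}∘f∘d^{l}, so the homotopy relation in the homotopy category of N-differential graded modules agrees with Kapranov's.) -/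
/-!
Composition with `d_V` on the left and with `d_U` on the right are commuting endomorphisms `L`, `R`
of `Hom(U, V)`. Since `q ^ N = 1`, the operators `D_{1-N}, …, D_{-1}` are `L - q ^ i R` for
`i = 1, …, N - 1`, so the claim is an evaluation of
`∏_{0 < i < N} (X - q ^ i Y) = (X ^ N - Y ^ N) / (X - Y) = ∑_{l < N} X ^ (N - 1 - l) Y ^ l`.
This identity holds over the domain `ℤ[ζ_N] = ℤ[t] / Φ_N(t)`, and it specializes to every
commutative ring in which `Φ_N(q) = 0`. The assumption on the `q ^ l - 1` forces this vanishing: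
`∏_{d ∣ N} Φ_d(q) = q ^ N - 1 = 0`, and for `d < N` the factor `Φ_d(q)` divides the
non-zero-divisor `q ^ d - 1`.
-/

/-- The differential of the Hom-complex `Hom^{•q}(U,V)` in degree `s`:
`D_s(g) = d_V ∘ g − q^s ⬝ (g ∘ d_U)`, where `q = ↑u` is a unit (so `q^s` makes sense
for `s : ℤ`). -/
def homDiff {k : Type*} [CommRing k] {U V : Type*} [AddCommGroup U] [AddCommGroup V]
    [Module k U] [Module k V] (u : kˣ) (dU : U →ₗ[k] U) (dV : V →ₗ[k] V)
    (s : ℤ) (g : U →ₗ[k] V) : U →ₗ[k] V :=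
  dV ∘ₗ g - ((u ^ s : kˣ) : k) • (g ∘ₗ dU)

open Polynomial

section CyclotomicFactorization

variable {R : Type*} [CommRing R] {n : ℕ}

theorem prod_sub_pow_mul_eq_sum_of_isPrimitiveRoot [IsDomain R] {ζ : R}
    (hζ : IsPrimitiveRoot ζ (n + 1)) {x y : R} (hxy : x ≠ y) :
    ∏ i ∈ Finset.range n, (x - ζ ^ (i + 1) * y) =
      ∑ l ∈ Finset.range (n + 1), x ^ (n - l) * y ^ l := by
  have factorization : x ^ (n + 1) - y ^ (n + 1) =
      ∏ i ∈ Finset.range (n + 1), (x - ζ ^ i * y) := by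
    simpa [eval_prod] using congrArg (eval x) (X_pow_sub_C_eq_prod hζ n.succ_pos (α := y) rfl)
  apply mul_right_cancel₀ (sub_ne_zero.mpr hxy)
  calc (∏ i ∈ Finset.range n, (x - ζ ^ (i + 1) * y)) * (x - y)
      = x ^ (n + 1) - y ^ (n + 1) := by
        rw [factorization, Finset.prod_range_succ', pow_zero, one_mul]
    _ = (∑ l ∈ Finset.range (n + 1), x ^ (n - l) * y ^ l) * (x - y) := by
        rw [← geom_sum₂_mul, geom_sum₂_comm]
        simp only [Nat.add_sub_cancel, mul_comm (y ^ _)]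

theorem isDomain_adjoinRoot_cyclotomic (hn : 0 < n) :
    IsDomain (AdjoinRoot (cyclotomic n ℤ)) :=
  AdjoinRoot.isDomain_of_prime (cyclotomic.irreducible hn).prime

theorem isPrimitiveRoot_root_cyclotomic (hn : 0 < n) :
    IsPrimitiveRoot (AdjoinRoot.root (cyclotomic n ℤ)) n := by
  have := isDomain_adjoinRoot_cyclotomic hn
  have : CharZero (AdjoinRoot (cyclotomic n ℤ)) := charZero_of_injective_ringHom
    (AdjoinRoot.of.injective_of_degree_ne_zero (degree_cyclotomic_pos n ℤ hn).ne')
  have : NeZero (n : AdjoinRoot (cyclotomic n ℤ)) := ⟨Nat.cast_ne_zero.mpr hn.ne'⟩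
  rw [← isRoot_cyclotomic_iff, ← map_cyclotomic n (AdjoinRoot.of _)]
  exact AdjoinRoot.isRoot_root _

theorem prod_sub_pow_mul_eq_sum_of_isRoot_cyclotomic {q : R}
    (hq : (cyclotomic (n + 1) R).IsRoot q) (x y : R) :
    ∏ i ∈ Finset.range n, (x - q ^ (i + 1) * y) =
      ∑ l ∈ Finset.range (n + 1), x ^ (n - l) * y ^ l := by
  have := isDomain_adjoinRoot_cyclotomic n.succ_pos
  have eval₂_eq_zero : (cyclotomic (n + 1) ℤ).eval₂ (Int.castRingHom R) q = 0 := by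
    rwa [eval₂_eq_eval_map, map_cyclotomic]
  let coeffHom := AdjoinRoot.lift (Int.castRingHom R) q eval₂_eq_zero
  obtain ⟨specialization, map_X, map_Y, map_ζ⟩ :
      ∃ φ : (AdjoinRoot (cyclotomic (n + 1) ℤ))[X][X] →+* R,
        φ X = x ∧ φ (C X) = y ∧ φ (C (C (AdjoinRoot.root _))) = q :=
    ⟨eval₂RingHom (eval₂RingHom coeffHom y) x, by simp, by simp, by simp [coeffHom]⟩
  have isPrimitiveRoot_ζ := (isPrimitiveRoot_root_cyclotomic n.succ_pos).map_of_injective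
    (f := C.comp C) (C_injective.comp C_injective)
  simpa [map_X, map_Y, map_ζ] using congrArg specialization
    (prod_sub_pow_mul_eq_sum_of_isPrimitiveRoot isPrimitiveRoot_ζ (X_ne_C X))

theorem isRoot_cyclotomic_of_pow_sub_one_mem_nonZeroDivisors {q : R} (hn : 0 < n)
    (hqn : q ^ n = 1) (hq : ∀ d ∈ n.properDivisors, q ^ d - 1 ∈ nonZeroDivisors R) :
    (cyclotomic n R).IsRoot q := by
  have eval_mem : ∀ d ∈ n.properDivisors, (cyclotomic d R).eval q ∈ nonZeroDivisors R := by
    intro d hd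
    obtain ⟨p, hp⟩ := cyclotomic.dvd_X_pow_sub_one d R
    have eval_mul : q ^ d - 1 = (cyclotomic d R).eval q * p.eval q := by
      simpa using congrArg (eval q) hp
    exact (mul_mem_nonZeroDivisors.mp (eval_mul ▸ hq d hd)).1
  have prod_eq_zero :
      (cyclotomic n R).eval q * ∏ d ∈ n.properDivisors, (cyclotomic d R).eval q = 0 := by
    have := congrArg (eval q) (prod_cyclotomic_eq_X_pow_sub_one hn R)
    rwa [← Nat.cons_self_properDivisors hn.ne', Finset.prod_cons, eval_mul, eval_prod, eval_sub,
      eval_pow, eval_X, eval_one, hqn, sub_self] at this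
  exact (mul_right_mem_nonZeroDivisors_eq_zero_iff (prod_mem eval_mem)).mp prod_eq_zero

end CyclotomicFactorization

theorem foldl_range_smul_eq_prod_smul {A M : Type*} [CommMonoid A] [MulAction A M]
    (a : ℕ → A) (v : M) (m : ℕ) :
    (List.range m).foldl (fun w i => a i • w) v = (∏ i ∈ Finset.range m, a i) • v := by
  induction m with
  | zero => simp
  | succ m ih =>
    rw [List.range_succ, List.foldl_append, ih, Finset.prod_range_succ_comm, mul_smul,
      List.foldl_cons, List.foldl_nil]

open scoped IsMulCommutative in
theorem foldl_range_sub_pow_smul_eq_sum_of_commute {k M : Type*} [CommRing k] [AddCommGroup M]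
    [Module k M] {n : ℕ} {q : k} (hq : (cyclotomic (n + 1) k).IsRoot q)
    {S T : Module.End k M} (hST : Commute S T) (v : M) :
    (List.range n).foldl (fun w i => S w - q ^ (i + 1) • T w) v =
      ∑ l ∈ Finset.range (n + 1), (S ^ (n - l) * T ^ l) v := by
  let A := Algebra.adjoin k {S, T}
  have : IsMulCommutative A := Algebra.isMulCommutative_adjoin k <| by
    rintro a (rfl | rfl) b (rfl | rfl)
    exacts [rfl, hST, hST.symm, rfl]
  let x : A := ⟨S, Algebra.subset_adjoin (by simp)⟩
  let y : A := ⟨T, Algebra.subset_adjoin (by simp)⟩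
  have isRoot_algebraMap : (cyclotomic (n + 1) A).IsRoot (algebraMap k A q) := by
    simpa only [map_cyclotomic] using hq.map (f := algebraMap k A)
  calc (List.range n).foldl (fun w i => S w - q ^ (i + 1) • T w) v
      = (List.range n).foldl (fun w i => (x - algebraMap k A q ^ (i + 1) * y) • w) v := by
        simp only [sub_smul, mul_smul, ← map_pow, algebraMap_smul]
        rfl
    _ = (∑ l ∈ Finset.range (n + 1), x ^ (n - l) * y ^ l) • v := by
        rw [foldl_range_smul_eq_prod_smul,
          prod_sub_pow_mul_eq_sum_of_isRoot_cyclotomic isRoot_algebraMap]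
    _ = ∑ l ∈ Finset.range (n + 1), (S ^ (n - l) * T ^ l) v := by
        rw [Finset.sum_smul]
        rfl

section Composition

variable {k U V : Type*} [CommSemiring k] [AddCommMonoid U] [AddCommMonoid V]
  [Module k U] [Module k V]

theorem compRight_pow_apply (dV : Module.End k V) (m : ℕ) (g : U →ₗ[k] V) :
    (LinearMap.compRight k dV ^ m : Module.End k (U →ₗ[k] V)) g = (dV ^ m) ∘ₗ g := by
  induction m with
  | zero => rfl
  | succ m ih => rw [pow_succ', pow_succ', Module.End.mul_apply, ih]; rfl

theorem lcomp_pow_apply (dU : Module.End k U) (m : ℕ) (g : U →ₗ[k] V) :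
    (LinearMap.lcomp k V dU ^ m : Module.End k (U →ₗ[k] V)) g = g ∘ₗ (dU ^ m) := by
  induction m with
  | zero => rfl
  | succ m ih => rw [pow_succ', pow_succ, Module.End.mul_apply, ih]; rfl

theorem commute_compRight_lcomp (dU : Module.End k U) (dV : Module.End k V) :
    Commute (LinearMap.compRight k dV : Module.End k (U →ₗ[k] V)) (LinearMap.lcomp k V dU) :=
  rfl

end Composition

theorem zpow_one_sub_add_of_pow_eq_one {G : Type*} [Group G] {u : G} {N : ℕ} (hu : u ^ N = 1)
    (i : ℕ) : u ^ (1 - (N : ℤ) + i) = u ^ (i + 1) := by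
  have shift : 1 - (N : ℤ) + i = (i + 1 : ℕ) - (N : ℤ) := by push_cast; ring
  rw [shift, zpow_sub, zpow_natCast, zpow_natCast, hu, inv_one, mul_one]

theorem homDiff_iterate_degree_one_sub_N_general {k U V : Type*} [CommRing k] [AddCommGroup U]
    [AddCommGroup V] [Module k U] [Module k V] {N : ℕ} (hN : 0 < N) {u : kˣ}
    (hu : (cyclotomic N k).IsRoot (u : k)) (dU : U →ₗ[k] U) (dV : V →ₗ[k] V) (f : U →ₗ[k] V) :
    (List.range (N - 1)).foldl (fun g (i : ℕ) => homDiff u dU dV (1 - (N : ℤ) + i) g) f =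
      ∑ l ∈ Finset.range N, (dV ^ (N - 1 - l)) ∘ₗ f ∘ₗ (dU ^ l) := by
  obtain ⟨n, rfl⟩ := Nat.exists_eq_add_one.mpr hN
  have pow_eq_one : u ^ (n + 1) = 1 := Units.ext <| by
    simpa using isRoot_of_unity_of_root_cyclotomic (Nat.mem_divisors_self _ hN.ne') hu
  simpa only [homDiff, zpow_one_sub_add_of_pow_eq_one pow_eq_one, Units.val_pow_eq_pow_val,
    Nat.add_sub_cancel, Module.End.mul_apply, compRight_pow_apply, lcomp_pow_apply,
    LinearMap.compRight_apply, LinearMap.lcomp_apply'] using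
    foldl_range_sub_pow_smul_eq_sum_of_commute hu (commute_compRight_lcomp dU dV) f

/-- for a homogeneous morphism `f` of degree `1−N`, the `(N−1)`-st iterated
differential of the Hom-complex is the plain sum:
`(D_{−1}∘D_{−2}∘⋯∘D_{1−N})(f) = Σ_{l=0}^{N−1} d_V^{N−1−l}∘f∘d_U^{l}`. -/
theorem homDiff_iterate_degree_one_sub_N
    {k : Type*} [CommRing k] (N : ℕ) (hN : 2 ≤ N) (q : k)
    (hq1 : q ^ N = 1)
    (hq2 : ∀ l : ℕ, 1 ≤ l → l ≤ N - 1 → q ^ l - 1 ∈ nonZeroDivisors k)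
    (u : kˣ) (hu : (u : k) = q)
    {U V : Type*} [AddCommGroup U] [AddCommGroup V] [Module k U] [Module k V]
    (dU : U →ₗ[k] U) (dV : V →ₗ[k] V)
    (f : U →ₗ[k] V) :
    (List.range (N - 1)).foldl (fun g i => homDiff u dU dV (1 - (N : ℤ) + (i : ℤ)) g) f =
      ∑ l ∈ Finset.range N, (dV ^ (N - 1 - l)) ∘ₗ f ∘ₗ (dU ^ l) := by
  subst hu
  have isRoot := isRoot_cyclotomic_of_pow_sub_one_mem_nonZeroDivisors (by omega) hq1 fun l hl =>
    hq2 l (Nat.pos_of_mem_properDivisors hl)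
      (Nat.le_sub_one_of_lt (Nat.mem_properDivisors.mp hl).2)
  -- Since `i : ℤ` here, `List.range (N - 1)` is coerced to `List ℤ`, by a monadic bind.
  simpa [List.foldl_map, ← List.map_eq_flatMap] using
    homDiff_iterate_degree_one_sub_N_general (by omega) isRoot dU dV f
end
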